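/- Let π be a permutation of [n] avoiding the barred pattern 2̄4135̄, let m be the position of the maximum entry n, and let I, J ⊆ [n−1] be two distinct maximal intervals of values occurring entirely before position m with max I < min J. Then every entry of π with value in I occurs at an earlier position than every entry of π with value in J (the value-blocks before n occur in increasing order of value). -/

import Mathlib

/-!
The entries from the maximum onwards decrease: an ascent to the right of the maximum would, together
with the maximum, form a 413-pattern, and no entry is large enough to complete it to a
4135-pattern. Consequently no 413-pattern has its 3 at or after the maximum, since the 5 that
completes it would be a larger entry further right.

If a value `a` of the block `I` and a value `b > a` outside `I` occur in the order `b`, `a`, then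
by maximality of `I` some value between `a` and `b` occurs at or after the maximum, and it is the 3
of such a 413-pattern.
-/

/-- A permutation of [n] avoids the barred pattern 2̄4135̄: every 413-pattern
(positions i<j<k with π j < π k < π i) extends to a 24135-pattern. -/
def Avoids24135 {n : ℕ} (π : Equiv.Perm (Fin n)) : Prop :=
  ∀ i j k : Fin n, i < j → j < k → π j < π k → π k < π i →
    ∃ h l : Fin n, h < i ∧ k < l ∧ π j < π h ∧ π h < π k ∧ π i < π l

/-- A permutation of [n] avoids the barred pattern 2̄413: every 413-pattern
extends to a 2413-pattern. -/
def Avoids2413 {n : ℕ} (π : Equiv.Perm (Fin n)) : Prop :=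
  ∀ i j k : Fin n, i < j → j < k → π j < π k → π k < π i →
    ∃ h : Fin n, h < i ∧ π j < π h ∧ π h < π k

/-- The Bell number `bell m`: the number of set partitions of an m-element set. -/
noncomputable def bell (m : ℕ) : ℕ := Nat.card (Finpartition (Finset.univ : Finset (Fin m)))

/-- The number of 2̄4135̄-avoiding permutations of [n]. -/
noncomputable def avoidCount (n : ℕ) : ℕ := Nat.card {π : Equiv.Perm (Fin n) // Avoids24135 π}

section Avoids4135

variable {α β : Type*} [LinearOrder α] [LinearOrder β] {f : α → β} {m : α}

/-- The sequence `f`, indexed by positions in `α`, avoids the barred pattern 4135̄: every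
413-pattern extends to a 4135-pattern. This is the half of `Avoids24135` that concerns the
entry 5. -/
def Avoids4135 (f : α → β) : Prop :=
  ∀ ⦃i j k : α⦄, i < j → j < k → f j < f k → f k < f i → ∃ l, k < l ∧ f i < f l

theorem Avoids24135.avoids4135 {n : ℕ} {π : Equiv.Perm (Fin n)} (h : Avoids24135 π) :
    Avoids4135 π := by
  intro i j k hij hjk hπjk hπki
  obtain ⟨-, l, -, hkl, -, -, hπil⟩ := h i j k hij hjk hπjk hπki
  exact ⟨l, hkl, hπil⟩

theorem Avoids4135.strictAntiOn_Ici (h : Avoids4135 f) (hf : f.Injective)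
    (hm : ∀ i, f i ≤ f m) : StrictAntiOn f (Set.Ici m) := by
  intro j hmj k _ hjk
  have hfkm : f k < f m := (hm k).lt_of_ne (hf.ne (hmj.trans_lt hjk).ne')
  obtain rfl | hmj := eq_or_lt_of_le hmj
  · exact hfkm
  refine (hf.ne hjk.ne').lt_of_le (not_lt.mp fun hfjk => ?_)
  obtain ⟨l, -, hfml⟩ := h hmj hjk hfjk hfkm
  exact (hm l).not_gt hfml

theorem Avoids4135.lt_of_pattern_413 (h : Avoids4135 f) (hf : f.Injective) (hm : ∀ i, f i ≤ f m)
    {i j k : α} (hij : i < j) (hjk : j < k) (hfjk : f j < f k) (hfki : f k < f i) : k < m := by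
  by_contra! hmk
  obtain ⟨l, hkl, hfil⟩ := h hij hjk hfjk hfki
  have hflk : f l < f k := h.strictAntiOn_Ici hf hm hmk (hmk.trans hkl.le) hkl
  exact (hfki.trans hfil).not_gt hflk

end Avoids4135

theorem eq_ordConnectedComponent_of_maximal {α : Type*} [LinearOrder α] {s t : Set α} {a : α}
    (ht : Maximal (fun u : Set α => u.OrdConnected ∧ u ⊆ s) t) (ha : a ∈ t) :
    t = s.ordConnectedComponent a :=
  have : t.OrdConnected := ht.prop.1
  ht.eq_of_subset ⟨inferInstance, Set.ordConnectedComponent_subset⟩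
    (Set.subset_ordConnectedComponent ha ht.prop.2)

theorem stmt10_general {α β : Type*} [LinearOrder α] [LinearOrder β] (π : α ≃ β)
    (h : Avoids4135 π) {m : α} (hm : ∀ i, π i ≤ π m) {I : Set β}
    (hI : Maximal (fun K : Set β => K.OrdConnected ∧ K ⊆ {v | π.symm v < m}) I)
    {p q : α} (hp : π p ∈ I) (hq : π q ∉ I) (hpq : π p < π q) : p < q := by
  by_contra! hqp
  replace hqp : q < p := hqp.lt_of_ne (ne_of_apply_ne π hpq.ne')
  have hpm : p < m := by simpa using hI.prop.2 hp
  obtain ⟨k, ⟨hπpk, hπkq⟩, hmk⟩ : ∃ k, π k ∈ Set.Icc (π p) (π q) ∧ m ≤ k := by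
    rw [eq_ordConnectedComponent_of_maximal hI hp, Set.mem_ordConnectedComponent,
      Set.uIcc_of_le hpq.le, Set.not_subset] at hq
    simpa [π.symm.surjective.exists, and_assoc] using hq
  have hpk : p < k := hpm.trans_le hmk
  exact hmk.not_gt <| h.lt_of_pattern_413 π.injective hm hqp hpk
    (hπpk.lt_of_ne (π.injective.ne hpk.ne)) (hπkq.lt_of_ne (π.injective.ne (hqp.trans hpk).ne'))

/-- In a 2̄4135̄-avoiding permutation, the value-blocks before the maximum occur in
increasing order of value: if I, J are distinct maximal value-intervals occurring
entirely before the maximum, with all of I below all of J, then every entry with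
value in I precedes every entry with value in J. -/
theorem stmt10 {n : ℕ} (π : Equiv.Perm (Fin n)) (h : Avoids24135 π)
    (m : Fin n) (hm : ∀ i, π i ≤ π m)
    (I J : Set (Fin n))
    (hI : I.OrdConnected) (hIbefore : ∀ v ∈ I, π.symm v < m)
    (hImax : ∀ K : Set (Fin n), K.OrdConnected → (∀ v ∈ K, π.symm v < m) → I ⊆ K → K = I)
    (hJ : J.OrdConnected) (hJbefore : ∀ v ∈ J, π.symm v < m)
    (hJmax : ∀ K : Set (Fin n), K.OrdConnected → (∀ v ∈ K, π.symm v < m) → J ⊆ K → K = J)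
    (hIne : I.Nonempty) (hJne : J.Nonempty) (hne : I ≠ J)
    (hlt : ∀ a ∈ I, ∀ b ∈ J, a < b) :
    ∀ p q : Fin n, π p ∈ I → π q ∈ J → p < q := fun _ _ hp hq =>
  stmt10_general π h.avoids4135 hm
    ⟨⟨hI, hIbefore⟩, fun K hK hIK => (hImax K hK.1 hK.2 hIK).le⟩ hp
    (fun hqI => (hlt _ hqI _ hq).false) (hlt _ hp _ hq)
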